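/- The map K is a chain homotopy between ω∘θ and the identity satisfying the side conditions of the Perturbation Lemma: δ ∘ K = ω₀ ∘ θ₀ − id on F (degree 0), K ∘ δ = ω₁ ∘ θ₁ − id on F (degree 1), θ₁ ∘ K = 0, and K ∘ ω₀ = 0. -/

import Mathlib

noncomputable section

/-- The differential `δ : F → F` (degree 1 → degree 0) on formal series
`F = (ℕ → ℚ)`, dual of `d` on `Λ(t,dt)`: `(δμ)(0) = 0`, `(δμ)(j) = j·μ(j-1)`. -/
def deltaDiff : (ℕ → ℚ) →ₗ[ℚ] (ℕ → ℚ) where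
  toFun μ := fun j => if j = 0 then 0 else (j : ℚ) * μ (j - 1)
  map_add' μ ν := by
    funext j
    by_cases h : j = 0 <;> simp [h, mul_add]
  map_smul' a μ := by
    funext j
    by_cases h : j = 0 <;> simp [h, smul_eq_mul] <;> ring

/-- `C₀ = ℚy ⊕ ℚz`, modelled as `ℚ × ℚ` (coefficients of `y` and `z`). -/
def ey : ℚ × ℚ := (1, 0)
def ez : ℚ × ℚ := (0, 1)

/-- `θ` in degree 0: `θ₀(λ) = -λ(0)·y + λ(1)·(y - z)`. -/
def theta0 : (ℕ → ℚ) →ₗ[ℚ] ℚ × ℚ where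
  toFun l := (-(l 0)) • ey + (l 1) • (ey - ez)
  map_add' l m := by
    simp only [Pi.add_apply]
    module
  map_smul' a l := by
    simp only [Pi.smul_apply, smul_eq_mul, RingHom.id_apply]
    module

/-- `θ` in degree 1: `θ₁(μ) = μ(0)·c`, with `C₁ = ℚc` modelled as `ℚ`. -/
def theta1 : (ℕ → ℚ) →ₗ[ℚ] ℚ := LinearMap.proj 0

/-- The indicator function of `0` (the series `α₀`). -/
def ind0 : ℕ → ℚ := fun j => if j = 0 then 1 else 0

/-- `ω` in degree 0: `ω₀(y) = -α₀`, `ω₀(z) = -∑_i α_i` (the negated constant `1`). -/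
def omega0 : ℚ × ℚ →ₗ[ℚ] (ℕ → ℚ) :=
  (LinearMap.toSpanSingleton ℚ (ℕ → ℚ) (-ind0)).comp (LinearMap.fst ℚ ℚ ℚ) +
    (LinearMap.toSpanSingleton ℚ (ℕ → ℚ) (-fun _ => (1 : ℚ))).comp (LinearMap.snd ℚ ℚ ℚ)

/-- `ω` in degree 1: `ω₁(c) = ∑_i β_i/(i+1)`, i.e. the series `j ↦ 1/(j+1)`. -/
def omega1 : ℚ →ₗ[ℚ] (ℕ → ℚ) :=
  LinearMap.toSpanSingleton ℚ (ℕ → ℚ) (fun j => 1 / ((j : ℚ) + 1))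

/-- The homotopy `K : F → F` (degree 0 → degree 1):
`K(λ)(0) = 0` and `K(λ)(i) = (λ(1) - λ(i+1))/(i+1)` for `i ≥ 1`. -/
def Kmap : (ℕ → ℚ) →ₗ[ℚ] (ℕ → ℚ) where
  toFun l := fun i => if i = 0 then 0 else (l 1 - l (i + 1)) / ((i : ℚ) + 1)
  map_add' l m := by
    funext i
    by_cases h : i = 0 <;> simp [h] <;> ring
  map_smul' a l := by
    funext i
    by_cases h : i = 0 <;> simp [h, smul_eq_mul] <;> ring

@[simp]
lemma deltaDiff_apply_zero (μ : ℕ → ℚ) : deltaDiff μ 0 = 0 := rfl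

@[simp]
lemma deltaDiff_apply_succ (μ : ℕ → ℚ) (j : ℕ) :
    deltaDiff μ (j + 1) = ((j : ℚ) + 1) * μ j := by
  simp [deltaDiff]

lemma theta0_apply (l : ℕ → ℚ) : theta0 l = (l 1 - l 0, -l 1) := by
  ext <;> simp [theta0, ey, ez, sub_eq_neg_add]

@[simp]
lemma theta1_apply (μ : ℕ → ℚ) : theta1 μ = μ 0 := rfl

@[simp]
lemma omega0_apply_zero (p : ℚ × ℚ) : omega0 p 0 = -p.1 - p.2 := by
  simp [omega0, ind0, sub_eq_add_neg]

@[simp]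
lemma omega0_apply_succ (p : ℚ × ℚ) (j : ℕ) : omega0 p (j + 1) = -p.2 := by
  simp [omega0, ind0]

@[simp]
lemma omega1_apply (a : ℚ) (i : ℕ) : omega1 a i = a / ((i : ℚ) + 1) := by
  simp [omega1, div_eq_mul_inv]

-- The value `0` prescribed at `i = 0` is the general formula, `(l 1 - l 1) / 1`, so
-- the identities for `K` need no case split.
lemma Kmap_apply (l : ℕ → ℚ) (i : ℕ) : Kmap l i = (l 1 - l (i + 1)) / ((i : ℚ) + 1) := by
  cases i <;> simp [Kmap]

lemma omega0_theta0_apply_zero (l : ℕ → ℚ) : omega0 (theta0 l) 0 = l 0 := by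
  simp [theta0_apply]

lemma omega0_theta0_apply_succ (l : ℕ → ℚ) (j : ℕ) : omega0 (theta0 l) (j + 1) = l 1 := by
  simp [theta0_apply]

theorem deltaDiff_comp_Kmap :
    deltaDiff.comp Kmap = omega0.comp theta0 - LinearMap.id := by
  refine LinearMap.ext fun l ↦ funext fun j ↦ ?_
  change deltaDiff (Kmap l) j = omega0 (theta0 l) j - l j
  cases j with
  | zero => rw [deltaDiff_apply_zero, omega0_theta0_apply_zero, sub_self]
  | succ j =>
    rw [deltaDiff_apply_succ, Kmap_apply, omega0_theta0_apply_succ,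
      mul_div_cancel₀ _ (Nat.cast_add_one_ne_zero j)]

theorem Kmap_comp_deltaDiff :
    Kmap.comp deltaDiff = omega1.comp theta1 - LinearMap.id := by
  refine LinearMap.ext fun μ ↦ funext fun i ↦ ?_
  have deltaDiff_one : deltaDiff μ 1 = μ 0 := by simp
  calc
    Kmap (deltaDiff μ) i = (μ 0 - ((i : ℚ) + 1) * μ i) / ((i : ℚ) + 1) := by
      rw [Kmap_apply, deltaDiff_one, deltaDiff_apply_succ]
    _ = μ 0 / ((i : ℚ) + 1) - μ i := by
      rw [sub_div, mul_div_cancel_left₀ _ (Nat.cast_add_one_ne_zero i)]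
    _ = omega1 (theta1 μ) i - μ i := by rw [omega1_apply, theta1_apply]

theorem theta1_comp_Kmap : theta1.comp Kmap = 0 :=
  LinearMap.ext fun l ↦ by simp [Kmap_apply]

theorem Kmap_comp_omega0 : Kmap.comp omega0 = 0 := by
  refine LinearMap.ext fun p ↦ funext fun i ↦ ?_
  have tail_constant : omega0 p 1 = omega0 p (i + 1) :=
    (omega0_apply_succ p 0).trans (omega0_apply_succ p i).symm
  simp [Kmap_apply, tail_constant]

/-- `K` is a chain homotopy between `ω∘θ` and the identity, satisfying the side
conditions of the Perturbation Lemma: `δ∘K = ω₀∘θ₀ - id`, `K∘δ = ω₁∘θ₁ - id`,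
`θ₁∘K = 0` and `K∘ω₀ = 0`. -/
theorem K_homotopy_side_conditions :
    deltaDiff.comp Kmap = omega0.comp theta0 - LinearMap.id ∧
    Kmap.comp deltaDiff = omega1.comp theta1 - LinearMap.id ∧
    theta1.comp Kmap = 0 ∧
    Kmap.comp omega0 = 0 :=
  ⟨deltaDiff_comp_Kmap, Kmap_comp_deltaDiff, theta1_comp_Kmap, Kmap_comp_omega0⟩

end
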